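/- Let S be an ordered semigroup satisfying axioms O1–O6. Then the lattice F(S) is distributive: for all functionals λ₁, λ₂, λ₃ on S, λ₁ ∧ (λ₂ ∨ λ₃) = (λ₁ ∧ λ₂) ∨ (λ₁ ∧ λ₃), where ∨ and ∧ denote the least upper bound and greatest lower bound in F(S). -/

import Mathlib

open scoped ENNReal

/-- `CC s t` : `s` is (sequentially) compactly contained in `t`, written `s ≪ t`. -/
def CC {S : Type*} [AddCommMonoid S] [PartialOrder S] (s t : S) : Prop :=
  ∀ u : ℕ → S, Monotone u → ∀ x : S, IsLUB (Set.range u) x → t ≤ x → ∃ n, s ≤ u n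

/-- An ordered semigroup (positive, with translation invariant order) satisfying axioms O1-O5. -/
structure CuO5 (S : Type*) [AddCommMonoid S] [PartialOrder S] : Prop where
  addRightMono : ∀ {s t : S}, s ≤ t → ∀ r : S, s + r ≤ t + r
  zeroLe : ∀ s : S, 0 ≤ s
  O1 : ∀ u : ℕ → S, Monotone u → ∃ x : S, IsLUB (Set.range u) x
  O2 : ∀ s : S, ∃ u : ℕ → S, (∀ n, CC (u n) (u (n + 1))) ∧ IsLUB (Set.range u) s
  O3 : ∀ {s₁ t₁ s₂ t₂ : S}, CC s₁ t₁ → CC s₂ t₂ → CC (s₁ + s₂) (t₁ + t₂)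
  O4 : ∀ u v : ℕ → S, Monotone u → Monotone v → ∀ x y : S,
    IsLUB (Set.range u) x → IsLUB (Set.range v) y →
    IsLUB (Set.range fun n => u n + v n) (x + y)
  O5 : ∀ {s' s t : S}, CC s' s → s ≤ t → ∃ r : S, s' + r ≤ t ∧ t ≤ s + r

/-- Axioms O1-O6. -/
structure CuO6 (S : Type*) [AddCommMonoid S] [PartialOrder S] extends CuO5 S : Prop where
  O6 : ∀ {s r t : S}, s ≤ r + t → ∀ {s' : S}, CC s' s →
    ∃ r' t' : S, s' ≤ r' + t' ∧ r' ≤ r ∧ r' ≤ s ∧ t' ≤ t ∧ t' ≤ s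

/-- A functional on `S`: additive, order preserving, zero preserving map to `[0,∞]`
preserving suprema of increasing sequences. -/
structure IsFunctional {S : Type*} [AddCommMonoid S] [PartialOrder S] (l : S → ℝ≥0∞) : Prop where
  map_zero : l 0 = 0
  map_add : ∀ s t : S, l (s + t) = l s + l t
  mono : ∀ {s t : S}, s ≤ t → l s ≤ l t
  map_sup : ∀ u : ℕ → S, Monotone u → ∀ x : S, IsLUB (Set.range u) x → l x = ⨆ n, l (u n)

/-- Real multiplication on `S` : a map `(0,∞] × S → S` additive, order preserving and
sup-(of increasing sequences)-preserving in each variable, with `1 · s = s`.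
Scalars are elements of `ℝ≥0∞` required to be positive. -/
structure RealMul (S : Type*) [AddCommMonoid S] [PartialOrder S] where
  smul : ℝ≥0∞ → S → S
  add_left : ∀ {a b : ℝ≥0∞}, 0 < a → 0 < b → ∀ s : S, smul (a + b) s = smul a s + smul b s
  add_right : ∀ {a : ℝ≥0∞}, 0 < a → ∀ s t : S, smul a (s + t) = smul a s + smul a t
  mono_left : ∀ {a b : ℝ≥0∞}, 0 < a → a ≤ b → ∀ s : S, smul a s ≤ smul b s
  mono_right : ∀ {a : ℝ≥0∞}, 0 < a → ∀ {s t : S}, s ≤ t → smul a s ≤ smul a t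
  sup_left : ∀ u : ℕ → ℝ≥0∞, Monotone u → 0 < u 0 → ∀ s : S,
    IsLUB (Set.range fun n => smul (u n) s) (smul (⨆ n, u n) s)
  sup_right : ∀ {a : ℝ≥0∞}, 0 < a → ∀ u : ℕ → S, Monotone u → ∀ x : S,
    IsLUB (Set.range u) x → IsLUB (Set.range fun n => smul a (u n)) (smul a x)
  one_smul : ∀ s : S, smul 1 s = s

/-- `D` is a dense subset of `S`: every element of `S` is the supremum of a rapidly
increasing sequence of elements of `D`. -/
def IsDenseSub {S : Type*} [AddCommMonoid S] [PartialOrder S] (D : Set S) : Prop :=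
  ∀ s : S, ∃ u : ℕ → S, (∀ n, u n ∈ D) ∧ (∀ n, CC (u n) (u (n + 1))) ∧ IsLUB (Set.range u) s

/-- `m` is the least upper bound of the functionals `l₁` and `l₂` in `F(S)`
(pointwise order). -/
def IsFSup {S : Type*} [AddCommMonoid S] [PartialOrder S] (l₁ l₂ m : S → ℝ≥0∞) : Prop :=
  IsFunctional m ∧ (∀ s, l₁ s ≤ m s) ∧ (∀ s, l₂ s ≤ m s) ∧
    ∀ d : S → ℝ≥0∞, IsFunctional d → (∀ s, l₁ s ≤ d s) → (∀ s, l₂ s ≤ d s) → ∀ s, m s ≤ d s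

/-- `m` is the greatest lower bound of the functionals `l₁` and `l₂` in `F(S)`
(pointwise order). -/
def IsFInf {S : Type*} [AddCommMonoid S] [PartialOrder S] (l₁ l₂ m : S → ℝ≥0∞) : Prop :=
  IsFunctional m ∧ (∀ s, m s ≤ l₁ s) ∧ (∀ s, m s ≤ l₂ s) ∧
    ∀ d : S → ℝ≥0∞, IsFunctional d → (∀ s, d s ≤ l₁ s) → (∀ s, d s ≤ l₂ s) → ∀ s, d s ≤ m s

/-- An isomorphism of ordered semigroups between `S` and the extended natural numbers. -/
def IsOrdSemigroupIso {S : Type*} [AddCommMonoid S] [PartialOrder S] (e : S ≃ ℕ∞) : Prop :=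
  (∀ a b : S, e (a + b) = e a + e b) ∧ e 0 = 0 ∧ ∀ a b : S, a ≤ b ↔ e a ≤ e b

theorem ENNReal.le_of_forall_le_add_mul {A B C : ℝ≥0∞} (hC : C ≠ ⊤)
    (h : ∀ η : ℝ≥0∞, η ≠ 0 → η ≠ ⊤ → A ≤ B + C * η) : A ≤ B := by
  refine ENNReal.le_of_forall_pos_le_add fun ε hε _ => ?_
  have hC1 : C + 1 ≠ ⊤ := by finiteness
  have hC0 : C + 1 ≠ 0 := by simp
  have hε' : (ε : ℝ≥0∞) ≠ 0 := by exact_mod_cast hε.ne'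
  refine (h (ε / (C + 1)) (ENNReal.div_ne_zero.2 ⟨hε', hC1⟩)
    (ENNReal.div_ne_top ENNReal.coe_ne_top hC0)).trans ?_
  gcongr
  calc C * (ε / (C + 1)) ≤ (C + 1) * (ε / (C + 1)) := by gcongr; exact le_self_add
    _ = ε := ENNReal.mul_div_cancel hC0 hC1

theorem ENNReal.le_of_forall_nat_mul_le_add {P M C : ℝ≥0∞} (hC : C ≠ ⊤)
    (h : ∀ n : ℕ, n ≠ 0 → n * P ≤ n * M + C) : P ≤ M := by
  refine ENNReal.le_of_forall_le_add_mul hC fun η hη hη' => ?_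
  obtain ⟨n, hn⟩ := ENNReal.exists_nat_gt (ENNReal.inv_ne_top.2 hη)
  have hn0 : n ≠ 0 := by rintro rfl; simp at hn
  have h1 : (1 : ℝ≥0∞) ≤ n * η := by
    calc (1 : ℝ≥0∞) = η⁻¹ * η := (ENNReal.inv_mul_cancel hη hη').symm
      _ ≤ n * η := by gcongr
  have hn0' : (n : ℝ≥0∞) ≠ 0 := by exact_mod_cast hn0
  refine (ENNReal.mul_le_mul_iff_right hn0' (ENNReal.natCast_ne_top n)).1 ((h n hn0).trans ?_)
  calc n * M + C = n * M + C * 1 := by rw [mul_one]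
    _ ≤ n * M + C * (n * η) := by gcongr
    _ = n * (M + C * η) := by ring

theorem ENNReal.sSup_add_sSup_le {U V : Set ℝ≥0∞} (hU : U.Nonempty) (hV : V.Nonempty)
    {B : ℝ≥0∞} (h : ∀ a ∈ U, ∀ b ∈ V, a + b ≤ B) : sSup U + sSup V ≤ B := by
  have := hU.to_subtype
  have := hV.to_subtype
  rw [sSup_eq_iSup', sSup_eq_iSup']
  exact ENNReal.iSup_add_iSup_le fun a b => h a a.2 b b.2

section

variable {S : Type*} [AddCommMonoid S] [PartialOrder S]

theorem CC.le {s t : S} (h : CC s t) : s ≤ t := by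
  obtain ⟨_, hn⟩ := h (fun _ => t) monotone_const t (by simp) le_rfl
  exact hn

theorem CC.mono {s s' t t' : S} (h : CC s' t') (hs : s ≤ s') (ht : t' ≤ t) : CC s t := by
  intro u hu x hx htx
  obtain ⟨n, hn⟩ := h u hu x hx (ht.trans htx)
  exact ⟨n, hs.trans hn⟩

theorem CuO5.isOrderedAddMonoid (hS : CuO5 S) : IsOrderedAddMonoid S where
  add_le_add_left _ _ h r := hS.addRightMono h r

theorem CuO5.le_add_right (hS : CuO5 S) (s t : S) : s ≤ s + t := by
  simpa [add_comm] using hS.addRightMono (hS.zeroLe t) s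

theorem CuO5.le_add_left (hS : CuO5 S) (s t : S) : s ≤ t + s := by
  simpa using hS.addRightMono (hS.zeroLe t) s

theorem CuO5.exists_seq (hS : CuO5 S) (s : S) : ∃ u : ℕ → S, Monotone u ∧
    (∀ n, CC (u n) (u (n + 1))) ∧ (∀ n, CC (u n) s) ∧ IsLUB (Set.range u) s := by
  obtain ⟨u, hu, hs⟩ := hS.O2 s
  exact ⟨u, monotone_nat_of_le_succ fun n => (hu n).le, hu,
    fun n => (hu n).mono le_rfl (hs.1 ⟨n + 1, rfl⟩), hs⟩

theorem CuO5.exists_between (hS : CuO5 S) {s t : S} (h : CC s t) :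
    ∃ r, CC s r ∧ CC r t := by
  obtain ⟨u, hu, hu', hut, hlub⟩ := hS.exists_seq t
  obtain ⟨n, hn⟩ := h u hu t hlub le_rfl
  exact ⟨u (n + 1), (hu' n).mono hn le_rfl, hut _⟩

theorem CuO5.exists_le_add (hS : CuO5 S) {x a b : S} (h : CC x (a + b)) :
    ∃ a' b', CC a' a ∧ CC b' b ∧ x ≤ a' + b' := by
  obtain ⟨u, hu, -, hua, hul⟩ := hS.exists_seq a
  obtain ⟨v, hv, -, hvb, hvl⟩ := hS.exists_seq b
  have := hS.isOrderedAddMonoid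
  obtain ⟨n, hn⟩ := h _ (hu.add hv) _ (hS.O4 u v hu hv a b hul hvl) le_rfl
  exact ⟨u n, v n, hua n, hvb n, hn⟩

theorem CuO5.nsmul_cc (hS : CuO5 S) {s t : S} (h : CC s t) {n : ℕ} (hn : n ≠ 0) :
    CC (n • s) (n • t) := by
  induction n with
  | zero => exact absurd rfl hn
  | succ k ih =>
    rcases eq_or_ne k 0 with rfl | hk
    · simpa using h
    · rw [succ_nsmul, succ_nsmul]
      exact hS.O3 (ih hk) h

/-- A monotone, subadditive, superhomogeneous map to `[0,∞]` that is determined by its values on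
compactly contained elements. -/
structure IsGauge (p : S → ℝ≥0∞) : Prop where
  mono : ∀ {s t : S}, s ≤ t → p s ≤ p t
  add_le : ∀ s t : S, p (s + t) ≤ p s + p t
  nat_mul_le : ∀ (n : ℕ) (s : S), n * p s ≤ p (n • s)
  le_of_cc : ∀ {s : S} {B : ℝ≥0∞}, (∀ s', CC s' s → p s' ≤ B) → p s ≤ B

namespace IsFunctional

variable {f : S → ℝ≥0∞}

theorem map_nsmul (hf : IsFunctional f) (n : ℕ) (s : S) : f (n • s) = n * f s := by
  induction n with
  | zero => simp [hf.map_zero]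
  | succ k ih => rw [succ_nsmul, hf.map_add, ih]; push_cast; ring

theorem isGauge (hS : CuO5 S) (hf : IsFunctional f) : IsGauge f where
  mono := hf.mono
  add_le s t := (hf.map_add s t).le
  nat_mul_le n s := (hf.map_nsmul n s).ge
  le_of_cc {s B} h := by
    obtain ⟨u, hu, -, hus, hl⟩ := hS.exists_seq s
    rw [hf.map_sup u hu s hl]
    exact iSup_le fun n => h _ (hus n)

theorem exists_cc_le_add (hS : CuO5 S) (hf : IsFunctional f) {x : S} (hx : f x ≠ ⊤)
    {η : ℝ≥0∞} (hη : η ≠ 0) : ∃ x', CC x' x ∧ f x ≤ f x' + η := by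
  by_contra! h
  rcases eq_or_ne (f x) 0 with h0 | h0
  · obtain ⟨u, -, -, hux, -⟩ := hS.exists_seq x
    have := h _ (hux 0)
    rw [h0] at this
    exact not_lt_zero this
  · have : f x ≤ f x - η := (hf.isGauge hS).le_of_cc fun x' hx' =>
      ENNReal.le_sub_of_add_le_right
        (ne_top_of_le_ne_top hx (le_add_self.trans (h x' hx').le)) (h x' hx').le
    exact absurd this (not_le.2 (ENNReal.sub_lt_self hx h0 hη))

theorem exists_cc_small_remainder (hS : CuO5 S) (hf : IsFunctional f) {x : S} (hx : f x ≠ ⊤)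
    {η : ℝ≥0∞} (hη : η ≠ 0) : ∃ x' e, CC x' x ∧ x ≤ x' + e ∧ f e ≤ η := by
  obtain ⟨y, hy, hfy⟩ := hf.exists_cc_le_add hS hx hη
  obtain ⟨x', hyx', hx'⟩ := hS.exists_between hy
  obtain ⟨e, he, he'⟩ := hS.O5 hyx' hx'.le
  refine ⟨x', e, hx', he', ?_⟩
  have hy' : f y ≠ ⊤ := ne_top_of_le_ne_top hx (hf.mono hy.le)
  refine (ENNReal.add_le_add_iff_left hy').1 (le_trans ?_ hfy)
  rw [← hf.map_add]
  exact hf.mono he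

/-- If `c ≤ f` and `f` exceeds `c` by at most `δ` at `r`, then it does so at all `y ≤ r`. -/
theorem le_add_of_le (hS : CuO5 S) {c : S → ℝ≥0∞} (hf : IsFunctional f) (hc : IsFunctional c)
    (hcf : ∀ s, c s ≤ f s) {r y : S} (hy : y ≤ r) (hr : f r ≠ ⊤) {δ : ℝ≥0∞}
    (h : f r ≤ c r + δ) : f y ≤ c y + δ := by
  refine (hf.isGauge hS).le_of_cc fun y' hy' => ?_
  obtain ⟨s, hs, hs'⟩ := hS.O5 hy' hy
  have hfs : f y' + f s ≤ f r := by rw [← hf.map_add]; exact hf.mono hs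
  have hs_top : f s ≠ ⊤ := ne_top_of_le_ne_top hr (le_add_self.trans hfs)
  refine (ENNReal.add_le_add_iff_right hs_top).1 ?_
  calc f y' + f s ≤ c r + δ := hfs.trans h
    _ ≤ c y + c s + δ := by rw [← hc.map_add]; gcongr; exact hc.mono hs'
    _ ≤ c y + f s + δ := by gcongr; exact hcf s
    _ = c y + δ + f s := by ring

end IsFunctional

namespace IsGauge

variable {p f g : S → ℝ≥0∞}

theorem le_nat_mul_add (hS : CuO6 S) (hp : IsGauge p) {a w : S} {η B : ℝ≥0∞} (n : ℕ) {z : S}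
    (ha : ∀ v, v ≤ a → v ≤ z → p v ≤ η) (hw : ∀ v, v ≤ w → v ≤ z → p v ≤ B)
    (hz : z ≤ n • a + w) : p z ≤ n * η + B := by
  induction n generalizing z with
  | zero => simpa using hw z (by simpa using hz) le_rfl
  | succ k ih =>
    refine hp.le_of_cc fun z' hz' => ?_
    obtain ⟨v₁, v₂, h, h1, h1', h2, h2'⟩ :=
      hS.O6 (s := z) (r := a) (t := k • a + w) (hz.trans_eq (by rw [succ_nsmul]; abel)) hz'
    calc p z' ≤ p v₁ + p v₂ := (hp.mono h).trans (hp.add_le _ _)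
      _ ≤ η + (k * η + B) := by
        gcongr
        · exact ha _ h1 h1'
        · exact ih (fun v hv hv' => ha v hv (hv'.trans h2'))
            (fun v hv hv' => hw v hv (hv'.trans h2')) h2
      _ = _ := by push_cast; ring

theorem nsmul_add_le [IsOrderedAddMonoid S] {u c s : S} (h : u + s ≤ c + s) (n : ℕ) :
    n • u + s ≤ n • c + s := by
  induction n with
  | zero => simp
  | succ k ih =>
    calc (k + 1) • u + s = k • u + (u + s) := by rw [succ_nsmul]; abel
      _ ≤ k • u + (c + s) := by gcongr
      _ = c + (k • u + s) := by abel
      _ ≤ c + (k • c + s) := by gcongr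
      _ = (k + 1) • c + s := by rw [succ_nsmul]; abel

/-- An approximate Riesz decomposition: an element below `r + t` is exhausted, as seen by `p`, by
elements `x₁ ≤ r` and `x₂ ≤ t` with `x₁ + x₂ ≤ x`. -/
theorem le_of_forall_add_le (hS : CuO6 S) (hp : IsGauge p) (hf : IsFunctional f)
    (hg : IsFunctional g) (hpf : ∀ s, p s ≤ f s) (hpg : ∀ s, p s ≤ g s) {x r t : S}
    (hx : x ≤ r + t) {B : ℝ≥0∞}
    (hB : ∀ x₁ x₂, x₁ ≤ r → x₂ ≤ t → x₁ + x₂ ≤ x → f x₁ + g x₂ ≤ B) : p x ≤ B := by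
  have := hS.isOrderedAddMonoid
  let V : Set ℝ≥0∞ := {y | ∃ x₁ x₂, x₁ ≤ r ∧ x₂ ≤ t ∧ x₁ + x₂ ≤ x ∧ y = f x₁ + g x₂}
  obtain ⟨M, hM⟩ : ∃ M, M = sSup V := ⟨_, rfl⟩
  have hle : ∀ {x₁ x₂}, x₁ ≤ r → x₂ ≤ t → x₁ + x₂ ≤ x → f x₁ + g x₂ ≤ M := by
    intro x₁ x₂ h1 h2 h3
    rw [hM]
    exact le_sSup ⟨x₁, x₂, h1, h2, h3, rfl⟩
  have hMB : M ≤ B := by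
    rw [hM]
    refine sSup_le ?_
    rintro _ ⟨x₁, x₂, h1, h2, h3, rfl⟩
    exact hB x₁ x₂ h1 h2 h3
  refine le_trans ?_ hMB
  rcases eq_or_ne M ⊤ with hMt | hMt
  · rw [hMt]; exact le_top
  refine ENNReal.le_of_forall_nat_mul_le_add hMt fun n hn => ?_
  refine ENNReal.le_of_forall_le_add_mul (C := 6 * n ^ 2 + 2 * n) (by finiteness)
    fun η hη hη' => ?_
  obtain ⟨x₁, x₂, h1, h2, h12, hM'⟩ : ∃ x₁ x₂, x₁ ≤ r ∧ x₂ ≤ t ∧ x₁ + x₂ ≤ x ∧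
      M ≤ f x₁ + g x₂ + η := by
    by_contra! h
    rcases eq_or_ne M 0 with h0 | h0
    · have := h 0 0 (hS.zeroLe _) (hS.zeroLe _) (by simpa using hS.zeroLe _)
      rw [h0] at this
      exact not_lt_zero this
    · refine absurd ?_ (not_le.2 (ENNReal.sub_lt_self hMt h0 hη))
      nth_rw 1 [hM]
      refine sSup_le ?_
      rintro _ ⟨x₁, x₂, h1, h2, h3, rfl⟩
      exact ENNReal.le_sub_of_add_le_right hη' (h x₁ x₂ h1 h2 h3).le
  have hfx : f x₁ ≠ ⊤ := ne_top_of_le_ne_top hMt (le_self_add.trans (hle h1 h2 h12))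
  have hgx : g x₂ ≠ ⊤ := ne_top_of_le_ne_top hMt (le_add_self.trans (hle h1 h2 h12))
  obtain ⟨y₁, e₁, hy1, hxe1, hfe⟩ := hf.exists_cc_small_remainder hS.toCuO5 hfx hη
  obtain ⟨y₂, e₂, hy2, hxe2, hge⟩ := hg.exists_cc_small_remainder hS.toCuO5 hgx hη
  have hfy : f y₁ ≠ ⊤ := ne_top_of_le_ne_top hfx (hf.mono hy1.le)
  have hgy : g y₂ ≠ ⊤ := ne_top_of_le_ne_top hgx (hg.mono hy2.le)
  have hM3 : M ≤ f y₁ + g y₂ + 3 * η :=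
    calc M ≤ f (y₁ + e₁) + g (y₂ + e₂) + η := by
          refine hM'.trans ?_
          gcongr
          · exact hf.mono hxe1
          · exact hg.mono hxe2
      _ ≤ (f y₁ + η) + (g y₂ + η) + η := by rw [hf.map_add, hg.map_add]; gcongr
      _ = _ := by ring
  obtain ⟨u, hu, hu'⟩ := hS.O5 (hS.O3 hy1 hy2) h12
  obtain ⟨r', hr, hr'⟩ := hS.O5 hy1 h1
  obtain ⟨t', ht, ht'⟩ := hS.O5 hy2 h2
  have hur : ∀ v, v ≤ u → v ≤ r' → p v ≤ 3 * η := by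
    intro v hvu hvr
    refine (hpf v).trans ((ENNReal.add_le_add_iff_left (ENNReal.add_ne_top.2 ⟨hfy, hgy⟩)).1
      (le_trans ?_ hM3))
    calc f y₁ + g y₂ + f v = f (y₁ + v) + g y₂ := by rw [hf.map_add]; ring
      _ ≤ M := hle (le_trans (by gcongr) hr) (hy2.le.trans h2)
        (le_trans (by rw [add_right_comm]; gcongr) hu)
  have hut : ∀ v, v ≤ u → v ≤ t' → p v ≤ 3 * η := by
    intro v hvu hvt
    refine (hpg v).trans ((ENNReal.add_le_add_iff_left (ENNReal.add_ne_top.2 ⟨hfy, hgy⟩)).1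
      (le_trans ?_ hM3))
    calc f y₁ + g y₂ + g v = f y₁ + g (y₂ + v) := by rw [hg.map_add]; ring
      _ ≤ M := hle (hy1.le.trans h1) (le_trans (by gcongr) ht)
        (le_trans (by rw [← add_assoc]; gcongr) hu)
  have hp0 : ∀ v, v ≤ (0 : S) → p v ≤ 0 := fun v hv =>
    ((hp.mono hv).trans (hpf 0)).trans hf.map_zero.le
  have hvr : ∀ v, v ≤ r' → v ≤ n • u → p v ≤ n * (3 * η) := by
    intro v hv hvn
    simpa using hp.le_nat_mul_add hS (w := 0) (B := 0) n
      (fun v' h h' => hur v' h (h'.trans hv)) (fun v' h _ => hp0 v' h) (by simpa using hvn)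
  have hvt : ∀ v, v ≤ t' → v ≤ n • u → p v ≤ n * (3 * η) := by
    intro v hv hvn
    simpa using hp.le_nat_mul_add hS (w := 0) (B := 0) n
      (fun v' h h' => hut v' h (h'.trans hv)) (fun v' h _ => hp0 v' h) (by simpa using hvn)
  have hcancel : u + (y₁ + y₂) ≤ (r' + t' + e₁ + e₂) + (y₁ + y₂) :=
    calc u + (y₁ + y₂) = y₁ + y₂ + u := add_comm _ _
      _ ≤ r + t := hu.trans hx
      _ ≤ (x₁ + r') + (x₂ + t') := by gcongr
      _ ≤ (y₁ + e₁ + r') + (y₂ + e₂ + t') := by gcongr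
      _ = _ := by abel
  have hnu : n • u ≤ n • r' + (n • t' + ((n • e₁ + y₁) + (n • e₂ + y₂))) :=
    ((hS.le_add_right _ _).trans (nsmul_add_le hcancel n)).trans_eq
      (by simp only [nsmul_add]; abel)
  have hrest : p ((n • e₁ + y₁) + (n • e₂ + y₂)) ≤ 2 * n * η + M :=
    calc p ((n • e₁ + y₁) + (n • e₂ + y₂)) ≤ f (n • e₁ + y₁) + g (n • e₂ + y₂) :=
          (hp.add_le _ _).trans (add_le_add (hpf _) (hpg _))
      _ = (n * f e₁ + f y₁) + (n * g e₂ + g y₂) := by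
          rw [hf.map_add, hg.map_add, hf.map_nsmul, hg.map_nsmul]
      _ ≤ (n * η + f y₁) + (n * η + g y₂) := by gcongr
      _ = 2 * n * η + (f y₁ + g y₂) := by ring
      _ ≤ 2 * n * η + M := by
          gcongr
          exact hle (hy1.le.trans h1) (hy2.le.trans h2) ((hS.le_add_right _ _).trans hu)
  have hpu : n * p u ≤ n * (n * (3 * η)) + (n * (n * (3 * η)) + (2 * n * η + M)) :=
    (hp.nat_mul_le n u).trans <| hp.le_nat_mul_add hS n hvr
      (fun v hv hvn => hp.le_nat_mul_add hS n
        (fun v' h h' => hvt v' h (h'.trans hvn))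
        (fun v' h _ => (hp.mono h).trans hrest) hv) hnu
  have hpx : p x ≤ M + p u :=
    calc p x ≤ p (x₁ + x₂) + p u := (hp.mono hu').trans (hp.add_le _ _)
      _ ≤ (f x₁ + g x₂) + p u := by
          gcongr
          exact (hp.add_le _ _).trans (add_le_add (hpf _) (hpg _))
      _ ≤ M + p u := by gcongr; exact hle h1 h2 h12
  calc n * p x ≤ n * (M + p u) := by gcongr
    _ = n * M + n * p u := by ring
    _ ≤ n * M + (n * (n * (3 * η)) + (n * (n * (3 * η)) + (2 * n * η + M))) := by gcongr
    _ = _ := by ring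

theorem add_le_of_add_le (hS : CuO5 S) (hp : IsGauge p) (hf : IsFunctional f)
    (hg : IsFunctional g) (hpf : ∀ s, p s ≤ f s) (hpg : ∀ s, p s ≤ g s) {x y r t x₁ x₂ : S}
    (h : x + y ≤ r + t) (h1 : x₁ ≤ r) (h2 : x₂ ≤ t) (h12 : x₁ + x₂ ≤ x)
    (hf1 : f x₁ ≠ ⊤) (hg2 : g x₂ ≠ ⊤) : f x₁ + g x₂ + p y ≤ f r + g t := by
  have := hS.isOrderedAddMonoid
  refine ENNReal.le_of_forall_le_add_mul (C := 2) (by finiteness) fun η hη hη' => ?_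
  obtain ⟨y₁, hy1, hfy⟩ := hf.exists_cc_le_add hS hf1 hη
  obtain ⟨y₂, hy2, hgy⟩ := hg.exists_cc_le_add hS hg2 hη
  obtain ⟨r', hr, hr'⟩ := hS.O5 hy1 h1
  obtain ⟨t', ht, ht'⟩ := hS.O5 hy2 h2
  have hcancel : y + (x₁ + x₂) ≤ (r' + t') + (x₁ + x₂) :=
    calc y + (x₁ + x₂) ≤ y + x := by gcongr
      _ = x + y := add_comm _ _
      _ ≤ r + t := h
      _ ≤ (x₁ + r') + (x₂ + t') := by gcongr
      _ = _ := by abel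
  have hpy : p y ≤ f r' + g t' := by
    refine ENNReal.le_of_forall_nat_mul_le_add (C := f x₁ + g x₂)
      (ENNReal.add_ne_top.2 ⟨hf1, hg2⟩) fun n _ => ?_
    calc n * p y ≤ p (n • y) := hp.nat_mul_le n y
      _ ≤ p ((n • r' + x₁) + (n • t' + x₂)) :=
          hp.mono (((hS.le_add_right _ _).trans (nsmul_add_le hcancel n)).trans_eq
            (by simp only [nsmul_add]; abel))
      _ ≤ f (n • r' + x₁) + g (n • t' + x₂) :=
          (hp.add_le _ _).trans (add_le_add (hpf _) (hpg _))
      _ = (n * f r' + f x₁) + (n * g t' + g x₂) := by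
          rw [hf.map_add, hg.map_add, hf.map_nsmul, hg.map_nsmul]
      _ = _ := by ring
  calc f x₁ + g x₂ + p y ≤ (f y₁ + η) + (g y₂ + η) + (f r' + g t') := by gcongr
    _ = f (y₁ + r') + g (y₂ + t') + 2 * η := by rw [hf.map_add, hg.map_add]; ring
    _ ≤ f r + g t + 2 * η := by
        gcongr
        · exact hf.mono hr
        · exact hg.mono ht

theorem isFunctional (hp : IsGauge p) (h0 : p 0 = 0)
    (h : ∀ s t, p s + p t ≤ p (s + t)) : IsFunctional p where
  map_zero := h0
  map_add s t := le_antisymm (hp.add_le s t) (h s t)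
  mono := hp.mono
  map_sup u hu x hx := by
    refine le_antisymm (hp.le_of_cc fun x' hx' => ?_) (iSup_le fun n => hp.mono (hx.1 ⟨n, rfl⟩))
    obtain ⟨n, hn⟩ := hx' u hu x hx le_rfl
    exact (hp.mono hn).trans (le_iSup (fun n => p (u n)) n)

end IsGauge

/-- The homogenized infimal convolution of `f` and `g`. -/
noncomputable def infConv (f g : S → ℝ≥0∞) (x : S) : ℝ≥0∞ :=
  sInf {y | ∃ (n : ℕ) (r t : S), n ≠ 0 ∧ n • x ≤ r + t ∧ y = (f r + g t) / n}

/-- The lower semicontinuous regularization of `infConv f g`. -/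
noncomputable def infConvReg (f g : S → ℝ≥0∞) (x : S) : ℝ≥0∞ :=
  sSup {y | ∃ x', CC x' x ∧ y = infConv f g x'}

variable {f g : S → ℝ≥0∞}

theorem nat_mul_infConv_le {n : ℕ} {x r t : S} (h : n • x ≤ r + t) :
    n * infConv f g x ≤ f r + g t := by
  rcases eq_or_ne n 0 with rfl | hn
  · simp
  have hn' : (n : ℝ≥0∞) ≠ 0 := by exact_mod_cast hn
  rw [mul_comm, ← ENNReal.le_div_iff_mul_le (Or.inl hn') (Or.inl (ENNReal.natCast_ne_top n))]
  exact sInf_le ⟨n, r, t, hn, h, rfl⟩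

theorem le_infConv {x : S} {B : ℝ≥0∞}
    (h : ∀ (n : ℕ) (r t : S), n ≠ 0 → n • x ≤ r + t → n * B ≤ f r + g t) :
    B ≤ infConv f g x := by
  refine le_sInf ?_
  rintro _ ⟨n, r, t, hn, hx, rfl⟩
  have hn' : (n : ℝ≥0∞) ≠ 0 := by exact_mod_cast hn
  rw [ENNReal.le_div_iff_mul_le (Or.inl hn') (Or.inl (ENNReal.natCast_ne_top n)), mul_comm]
  exact h n r t hn hx

theorem infConv_le_left (hg : IsFunctional g) (x : S) : infConv f g x ≤ f x := by
  simpa [hg.map_zero] using nat_mul_infConv_le (f := f) (g := g) (n := 1) (x := x) (r := x)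
    (t := 0) (by simp)

theorem infConv_le_right (hf : IsFunctional f) (x : S) : infConv f g x ≤ g x := by
  simpa [hf.map_zero] using nat_mul_infConv_le (f := f) (g := g) (n := 1) (x := x) (r := 0)
    (t := x) (by simp)

theorem infConv_mono (hS : CuO5 S) {x y : S} (h : x ≤ y) : infConv f g x ≤ infConv f g y := by
  have := hS.isOrderedAddMonoid
  exact le_infConv fun n r t _ hy => nat_mul_infConv_le ((nsmul_le_nsmul_right h n).trans hy)

theorem nat_mul_infConv_le_nsmul (k : ℕ) (x : S) :
    k * infConv f g x ≤ infConv f g (k • x) := by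
  refine le_infConv fun n r t _ h => ?_
  rw [← mul_assoc, ← Nat.cast_mul]
  exact nat_mul_infConv_le (by rwa [mul_nsmul'])

theorem infConv_add_le (hS : CuO5 S) (hf : IsFunctional f) (hg : IsFunctional g) (x y : S) :
    infConv f g (x + y) ≤ infConv f g x + infConv f g y := by
  have := hS.isOrderedAddMonoid
  rw [infConv, infConv, infConv, ENNReal.sInf_add, le_iInf₂_iff]
  rintro _ ⟨n, r, t, hn, hx, rfl⟩
  rw [add_comm (_ / _), ENNReal.sInf_add, le_iInf₂_iff]
  rintro _ ⟨k, r', t', hk, hy, rfl⟩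
  refine sInf_le ⟨n * k, k • r + n • r', k • t + n • t', mul_ne_zero hn hk, ?_, ?_⟩
  · calc (n * k) • (x + y) = k • (n • x) + n • (k • y) := by
          rw [nsmul_add, mul_nsmul, mul_nsmul']
      _ ≤ k • (r + t) + n • (r' + t') := by gcongr
      _ = _ := by simp only [nsmul_add]; abel
  · have hn' : (n : ℝ≥0∞) ≠ 0 := by exact_mod_cast hn
    have hk' : (k : ℝ≥0∞) ≠ 0 := by exact_mod_cast hk
    have e1 : f (k • r + n • r') + g (k • t + n • t')
        = k * (f r + g t) + n * (f r' + g t') := by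
      rw [hf.map_add, hg.map_add, hf.map_nsmul, hf.map_nsmul, hg.map_nsmul, hg.map_nsmul]; ring
    rw [e1, ENNReal.add_div (a := k * _), Nat.cast_mul,
      ENNReal.mul_div_mul_left _ _ hn' (ENNReal.natCast_ne_top n), mul_comm (n : ℝ≥0∞) (k : ℝ≥0∞),
      ENNReal.mul_div_mul_left _ _ hk' (ENNReal.natCast_ne_top k), add_comm]

theorem infConv_le_reg {x' x : S} (h : CC x' x) : infConv f g x' ≤ infConvReg f g x :=
  le_sSup ⟨x', h, rfl⟩

theorem infConvReg_le_of_cc {x : S} {B : ℝ≥0∞} (h : ∀ x', CC x' x → infConv f g x' ≤ B) :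
    infConvReg f g x ≤ B := by
  refine sSup_le ?_
  rintro _ ⟨x', hx', rfl⟩
  exact h x' hx'

theorem infConvReg_le (hS : CuO5 S) (x : S) : infConvReg f g x ≤ infConv f g x :=
  infConvReg_le_of_cc fun _ hx' => infConv_mono hS hx'.le

theorem infConvReg_isGauge (hS : CuO5 S) (hf : IsFunctional f) (hg : IsFunctional g) :
    IsGauge (infConvReg f g) where
  mono h := infConvReg_le_of_cc fun _ hx' => infConv_le_reg (hx'.mono le_rfl h)
  add_le s t := infConvReg_le_of_cc fun x' hx' => by
    obtain ⟨a, b, ha, hb, h⟩ := hS.exists_le_add hx'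
    exact ((infConv_mono hS h).trans (infConv_add_le hS hf hg a b)).trans
      (add_le_add (infConv_le_reg ha) (infConv_le_reg hb))
  nat_mul_le n s := by
    rcases eq_or_ne n 0 with rfl | hn
    · simp
    rw [infConvReg, ENNReal.mul_sSup, iSup₂_le_iff]
    rintro _ ⟨x', hx', rfl⟩
    exact (nat_mul_infConv_le_nsmul n x').trans (infConv_le_reg (hS.nsmul_cc hx' hn))
  le_of_cc {s B} h := infConvReg_le_of_cc fun x' hx' => by
    obtain ⟨y, hy, hy'⟩ := hS.exists_between hx'
    exact (infConv_le_reg hy).trans (h y hy')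

theorem infConvReg_isFunctional (hS : CuO6 S) (hf : IsFunctional f) (hg : IsFunctional g) :
    IsFunctional (infConvReg f g) := by
  have hS5 := hS.toCuO5
  have hp := infConvReg_isGauge hS5 hf hg
  have hpf : ∀ s, infConvReg f g s ≤ f s := fun s =>
    (infConvReg_le hS5 s).trans (infConv_le_left hg s)
  have hpg : ∀ s, infConvReg f g s ≤ g s := fun s =>
    (infConvReg_le hS5 s).trans (infConv_le_right hf s)
  have key : ∀ x y r t : S, x + y ≤ r + t →
      infConvReg f g x + infConvReg f g y ≤ f r + g t := by
    intro x y r t h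
    rcases eq_or_ne (f r + g t) ⊤ with ht | ht
    · rw [ht]; exact le_top
    obtain ⟨hr, ht⟩ := ENNReal.add_ne_top.1 ht
    have hy : infConvReg f g y ≤ f r + g t :=
      ((hp.mono ((hS.le_add_left y x).trans h)).trans (hp.add_le _ _)).trans
        (add_le_add (hpf r) (hpg t))
    have hy' : infConvReg f g y ≠ ⊤ := ne_top_of_le_ne_top (ENNReal.add_ne_top.2 ⟨hr, ht⟩) hy
    have : infConvReg f g x ≤ f r + g t - infConvReg f g y :=
      hp.le_of_forall_add_le hS hf hg hpf hpg ((hS.le_add_right x y).trans h)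
        fun x₁ x₂ h1 h2 h12 => ENNReal.le_sub_of_add_le_right hy' <|
          hp.add_le_of_add_le hS5 hf hg hpf hpg h h1 h2 h12
            (ne_top_of_le_ne_top hr (hf.mono h1)) (ne_top_of_le_ne_top ht (hg.mono h2))
    calc _ ≤ (f r + g t - infConvReg f g y) + infConvReg f g y := by gcongr
      _ = _ := tsub_add_cancel_of_le hy
  have h0 : infConvReg f g 0 = 0 := le_antisymm ((hpf 0).trans hf.map_zero.le) zero_le
  refine hp.isFunctional h0 fun x y => ?_
  have hcc : ∀ x' y', CC x' x → CC y' y →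
      infConvReg f g x' + infConvReg f g y' ≤ infConvReg f g (x + y) := by
    intro x' y' hx hy
    refine le_trans (le_infConv fun n r t hn h => ?_) (infConv_le_reg (hS.O3 hx hy))
    rw [mul_add]
    exact (add_le_add (hp.nat_mul_le n x') (hp.nat_mul_le n y')).trans
      (key _ _ _ _ (by rwa [← nsmul_add]))
  obtain ⟨u, -, -, hu, -⟩ := hS5.exists_seq x
  obtain ⟨v, -, -, hv, -⟩ := hS5.exists_seq y
  rw [infConvReg.eq_1 f g x, infConvReg.eq_1 f g y]
  refine ENNReal.sSup_add_sSup_le ?_ ?_ ?_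
  · exact ⟨_, u 0, hu 0, rfl⟩
  · exact ⟨_, v 0, hv 0, rfl⟩
  rintro _ ⟨x', hx', rfl⟩ _ ⟨y', hy', rfl⟩
  obtain ⟨x'', h1, h1'⟩ := hS.exists_between hx'
  obtain ⟨y'', h2, h2'⟩ := hS.exists_between hy'
  exact (add_le_add (infConv_le_reg h1) (infConv_le_reg h2)).trans (hcc _ _ h1' h2')

/-- The supremal convolution of `f` and `g`. -/
noncomputable def supConv (f g : S → ℝ≥0∞) (x : S) : ℝ≥0∞ :=
  sSup {w | ∃ y z : S, y + z ≤ x ∧ w = f y + g z}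

theorem le_supConv {x y z : S} (h : y + z ≤ x) : f y + g z ≤ supConv f g x :=
  le_sSup ⟨y, z, h, rfl⟩

theorem supConv_le {x : S} {B : ℝ≥0∞} (h : ∀ y z, y + z ≤ x → f y + g z ≤ B) :
    supConv f g x ≤ B := by
  refine sSup_le ?_
  rintro _ ⟨y, z, hx, rfl⟩
  exact h y z hx

theorem left_le_supConv (hg : IsFunctional g) (x : S) : f x ≤ supConv f g x := by
  simpa [hg.map_zero] using le_supConv (f := f) (g := g) (x := x) (y := x) (z := 0) (by simp)

theorem right_le_supConv (hf : IsFunctional f) (x : S) : g x ≤ supConv f g x := by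
  simpa [hf.map_zero] using le_supConv (f := f) (g := g) (x := x) (y := 0) (z := x) (by simp)

theorem add_le_supConv_add (hS : CuO5 S) (hf : IsFunctional f) (hg : IsFunctional g) {x z : S}
    (h : z ≤ x) : f x + g z ≤ supConv f g x + f z := by
  rcases eq_or_ne (f x) ⊤ with hx | hx
  · rw [eq_top_iff.2 (hx.ge.trans (left_le_supConv hg x))]
    simp
  have hle : f x ≤ supConv f g x + f z := (left_le_supConv hg x).trans le_self_add
  have : g z ≤ supConv f g x + f z - f x := by
    refine (hg.isGauge hS).le_of_cc fun z' hz' => ENNReal.le_sub_of_add_le_left hx ?_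
    obtain ⟨r, hr, hr'⟩ := hS.O5 hz' h
    calc f x + g z' ≤ (f z + f r) + g z' := by rw [← hf.map_add]; gcongr; exact hf.mono hr'
      _ = (f r + g z') + f z := by ring
      _ ≤ supConv f g x + f z := by gcongr; exact le_supConv (by rwa [add_comm])
  calc f x + g z ≤ f x + (supConv f g x + f z - f x) := by gcongr
    _ = _ := add_tsub_cancel_of_le hle

theorem supConv_isFunctional (hS : CuO6 S) (hf : IsFunctional f) (hg : IsFunctional g) :
    IsFunctional (supConv f g) := by
  have := hS.isOrderedAddMonoid
  have hS5 := hS.toCuO5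
  have hmono : ∀ {s t : S}, s ≤ t → supConv f g s ≤ supConv f g t := fun h =>
    supConv_le fun y z hyz => le_supConv (hyz.trans h)
  refine ⟨?_, fun x₁ x₂ => le_antisymm ?_ ?_, hmono, fun u hu x hx => le_antisymm ?_ ?_⟩
  · refine le_antisymm (supConv_le fun y z h => ?_) zero_le
    have hy := hf.mono ((hS.le_add_right y z).trans h)
    have hz := hg.mono ((hS.le_add_left z y).trans h)
    rw [hf.map_zero] at hy
    rw [hg.map_zero] at hz
    simpa using add_le_add hy hz
  · refine supConv_le fun y z h => ?_
    rcases eq_or_ne (f x₁) ⊤ with h1 | h1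
    · rw [eq_top_iff.2 (h1.ge.trans (left_le_supConv hg x₁))]; simp
    rcases eq_or_ne (f x₂) ⊤ with h2 | h2
    · rw [eq_top_iff.2 (h2.ge.trans (left_le_supConv hg x₂))]; simp
    have hyz : f y + f z ≤ f x₁ + f x₂ := by
      rw [← hf.map_add, ← hf.map_add]; exact hf.mono h
    have hy : f y ≠ ⊤ :=
      ne_top_of_le_ne_top (ENNReal.add_ne_top.2 ⟨h1, h2⟩) (le_self_add.trans hyz)
    have hyF : f y ≤ supConv f g x₁ + supConv f g x₂ :=
      (le_self_add.trans hyz).trans (add_le_add (left_le_supConv hg _) (left_le_supConv hg _))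
    have : g z ≤ supConv f g x₁ + supConv f g x₂ - f y := by
      refine (hg.isGauge hS5).le_of_forall_add_le hS hg hg (fun _ => le_rfl) (fun _ => le_rfl)
        ((hS.le_add_left z y).trans h) fun z₁ z₂ hz1 hz2 hz => ENNReal.le_sub_of_add_le_left hy ?_
      have t1 : f z₁ ≠ ⊤ := ne_top_of_le_ne_top h1 (hf.mono hz1)
      have t2 : f z₂ ≠ ⊤ := ne_top_of_le_ne_top h2 (hf.mono hz2)
      refine (ENNReal.add_le_add_iff_right (ENNReal.add_ne_top.2 ⟨t1, t2⟩)).1 ?_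
      calc f y + (g z₁ + g z₂) + (f z₁ + f z₂) = f y + f (z₁ + z₂) + (g z₁ + g z₂) := by
            rw [hf.map_add]; ring
        _ ≤ f y + f z + (g z₁ + g z₂) := by gcongr; exact hf.mono hz
        _ ≤ (f x₁ + f x₂) + (g z₁ + g z₂) := by gcongr
        _ = (f x₁ + g z₁) + (f x₂ + g z₂) := by ring
        _ ≤ (supConv f g x₁ + f z₁) + (supConv f g x₂ + f z₂) :=
            add_le_add (add_le_supConv_add hS5 hf hg hz1) (add_le_supConv_add hS5 hf hg hz2)
        _ = _ := by ring
    calc f y + g z ≤ f y + (supConv f g x₁ + supConv f g x₂ - f y) := by gcongr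
      _ = _ := add_tsub_cancel_of_le hyF
  · rw [supConv.eq_1 f g x₁, supConv.eq_1 f g x₂]
    refine ENNReal.sSup_add_sSup_le ?_ ?_ ?_
    · exact ⟨_, 0, 0, by simpa using hS.zeroLe _, rfl⟩
    · exact ⟨_, 0, 0, by simpa using hS.zeroLe _, rfl⟩
    rintro _ ⟨y, z, h, rfl⟩ _ ⟨y', z', h', rfl⟩
    calc f y + g z + (f y' + g z') = f (y + y') + g (z + z') := by
          rw [hf.map_add, hg.map_add]; ring
      _ ≤ _ := le_supConv (by rw [add_add_add_comm]; gcongr)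
  · refine supConv_le fun y z h => ?_
    obtain ⟨v, hv, -, hvy, hvl⟩ := hS5.exists_seq y
    obtain ⟨w, hw, -, hwz, hwl⟩ := hS5.exists_seq z
    rw [hf.map_sup v hv y hvl, hg.map_sup w hw z hwl]
    refine ENNReal.iSup_add_iSup_le fun i j => ?_
    obtain ⟨n, hn⟩ := hS.O3 (hvy i) (hwz j) u hu x hx h
    exact (le_supConv hn).trans (le_iSup (fun n => supConv f g (u n)) n)
  · exact iSup_le fun n => hmono (hx.1 ⟨n, rfl⟩)

/-- To bound `μ x` by `w x`, it suffices to do so on elements where either `f` or `g` is close to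
the infimum `c` of `f` and `g`. -/
theorem IsFInf.le_of_cover (hS : CuO6 S) (hf : IsFunctional f) (hg : IsFunctional g)
    {c μ w : S → ℝ≥0∞} (hc : IsFInf f g c) (hμ : IsFunctional μ) (hw : IsFunctional w)
    {x : S} (hx : c x ≠ ⊤) {K : ℝ≥0∞}
    (hF : ∀ (n : ℕ) (δ : ℝ≥0∞) (y : S), y ≤ n • x → f y ≠ ⊤ → f y ≤ c y + n * δ →
      μ y ≤ w y + n * δ)
    (hG : ∀ (n : ℕ) (δ : ℝ≥0∞) (y : S), y ≤ n • x → g y ≠ ⊤ → g y ≤ c y + n * δ →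
      μ y ≤ w y + n * (δ + K)) : μ x ≤ w x + K := by
  have := hS.isOrderedAddMonoid
  have hS5 := hS.toCuO5
  obtain ⟨hcF, hcf, hcg, hc_max⟩ := hc
  have hreg : ∀ s, infConvReg f g s ≤ c s :=
    hc_max _ (infConvReg_isFunctional hS hf hg)
      (fun s => (infConvReg_le hS5 s).trans (infConv_le_left hg s))
      (fun s => (infConvReg_le hS5 s).trans (infConv_le_right hf s))
  refine ENNReal.le_of_forall_le_add_mul (C := 4) (by finiteness) fun ε hε hε' => ?_
  obtain ⟨x₀, hx₀, hcx₀⟩ := hcF.exists_cc_le_add hS5 hx hε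
  refine (hμ.isGauge hS5).le_of_cc fun x₁ hx₁ => ?_
  obtain ⟨x', hx', h0, h1⟩ : ∃ x', CC x' x ∧ x₀ ≤ x' ∧ x₁ ≤ x' := by
    obtain ⟨u, hu, -, hux, hul⟩ := hS5.exists_seq x
    obtain ⟨i, hi⟩ := hx₀ u hu x hul le_rfl
    obtain ⟨j, hj⟩ := hx₁ u hu x hul le_rfl
    exact ⟨u (max i j), hux _, hi.trans (hu (le_max_left i j)), hj.trans (hu (le_max_right i j))⟩
  have hcx' : c x ≤ c x' + ε := hcx₀.trans (by gcongr; exact hcF.mono h0)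
  refine (hμ.mono h1).trans ?_
  have hlt : infConv f g x' < c x + ε :=
    ((infConv_le_reg hx').trans (hreg x)).trans_lt (ENNReal.lt_add_right hx hε)
  obtain ⟨_, ⟨n, r, t, hn, hrt, rfl⟩, hlt⟩ := sInf_lt_iff.1 hlt
  have hn' : (n : ℝ≥0∞) ≠ 0 := by exact_mod_cast hn
  have hle : f r + g t ≤ n * (c x + ε) := by
    rw [mul_comm]
    exact (ENNReal.div_le_iff_le_mul (Or.inl hn') (Or.inl (ENNReal.natCast_ne_top n))).1 hlt.le
  obtain ⟨hr_top, ht_top⟩ := ENNReal.add_ne_top.1 (ne_top_of_le_ne_top (by finiteness) hle)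
  have hsum : f r + g t ≤ c r + c t + n * (2 * ε) :=
    calc f r + g t ≤ n * (c x' + ε + ε) := hle.trans (by gcongr)
      _ = c (n • x') + n * (2 * ε) := by rw [hcF.map_nsmul]; ring
      _ ≤ c r + c t + n * (2 * ε) := by rw [← hcF.map_add]; gcongr; exact hcF.mono hrt
  have hfr : f r ≤ c r + n * (2 * ε) := by
    refine (ENNReal.add_le_add_iff_right ht_top).1 (hsum.trans ?_)
    calc c r + c t + n * (2 * ε) ≤ c r + g t + n * (2 * ε) := by gcongr; exact hcg t
      _ = _ := by ring
  have hgt : g t ≤ c t + n * (2 * ε) := by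
    refine (ENNReal.add_le_add_iff_left hr_top).1 (hsum.trans ?_)
    calc c r + c t + n * (2 * ε) ≤ f r + c t + n * (2 * ε) := by gcongr; exact hcf r
      _ = _ := by ring
  refine (ENNReal.mul_le_mul_iff_right hn' (ENNReal.natCast_ne_top n)).1 ?_
  rw [← hμ.map_nsmul]
  refine (hμ.isGauge hS5).le_of_forall_add_le hS hμ hμ (fun _ => le_rfl) (fun _ => le_rfl) hrt
    fun y z hy hz hyz => ?_
  have hyz' : y + z ≤ n • x := hyz.trans (nsmul_le_nsmul_right hx'.le n)
  calc μ y + μ z ≤ (w y + n * (2 * ε)) + (w z + n * (2 * ε + K)) := by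
        gcongr
        · exact hF n _ y ((hS.le_add_right y z).trans hyz')
            (ne_top_of_le_ne_top hr_top (hf.mono hy))
            (hf.le_add_of_le hS5 hcF hcf hy hr_top hfr)
        · exact hG n _ z ((hS.le_add_left z y).trans hyz')
            (ne_top_of_le_ne_top ht_top (hg.mono hz))
            (hg.le_add_of_le hS5 hcF hcg hz ht_top hgt)
    _ = w (y + z) + n * (K + 4 * ε) := by rw [hw.map_add]; ring
    _ ≤ w (n • x) + n * (K + 4 * ε) := by gcongr; exact hw.mono hyz'
    _ = _ := by rw [hw.map_nsmul]; ring

end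

/-- the lattice F(S) is distributive:
`λ₁ ∧ (λ₂ ∨ λ₃) = (λ₁ ∧ λ₂) ∨ (λ₁ ∧ λ₃)`. -/
theorem functionals_distrib {S : Type*} [AddCommMonoid S] [PartialOrder S]
    (hS : CuO6 S) (l₁ l₂ l₃ : S → ℝ≥0∞)
    (h₁ : IsFunctional l₁) (h₂ : IsFunctional l₂) (h₃ : IsFunctional l₃)
    (a b c d e : S → ℝ≥0∞)
    (ha : IsFSup l₂ l₃ a) (hb : IsFInf l₁ a b)
    (hc : IsFInf l₁ l₂ c) (hd : IsFInf l₁ l₃ d) (he : IsFSup c d e) :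
    ∀ s : S, b s = e s := by
  have hS5 := hS.toCuO5
  obtain ⟨hbF, hb1, hba, hb_max⟩ := hb
  obtain ⟨heF, hce, hde, he_min⟩ := he
  obtain ⟨hcF, hc1, hc2, -⟩ := id hc
  obtain ⟨hdF, hd1, hd3, -⟩ := id hd
  obtain ⟨-, h2a, h3a, ha_min⟩ := ha
  intro x
  refine le_antisymm ?_ (he_min b hbF
    (hb_max c hcF hc1 fun s => (hc2 s).trans (h2a s))
    (hb_max d hdF hd1 fun s => (hd3 s).trans (h3a s)) x)
  rcases eq_or_ne (e x) ⊤ with hx | hx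
  · rw [hx]; exact le_top
  have ha_le : ∀ s, a s ≤ supConv l₂ l₃ s :=
    ha_min _ (supConv_isFunctional hS h₂ h₃) (left_le_supConv h₃) (right_le_supConv h₂)
  have main : b x ≤ e x + 0 := by
    refine hc.le_of_cover hS h₁ h₂ hbF heF (ne_top_of_le_ne_top hx (hce x))
      (fun n δ y _ _ h => (hb1 y).trans (h.trans (by gcongr; exact hce y)))
      fun n δ y hy hy2 hyc => ?_
    have hey : e y ≠ ⊤ := by
      refine ne_top_of_le_ne_top ?_ (heF.mono hy)
      rw [heF.map_nsmul]
      finiteness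
    rw [add_zero]
    refine hd.le_of_cover hS h₁ h₃ hbF heF (ne_top_of_le_ne_top hey (hde y))
      (fun k δ' z _ _ h => (hb1 z).trans (h.trans (by gcongr; exact hde z)))
      fun k δ' z hz hz3 hzd => ?_
    refine ((hba z).trans (ha_le z)).trans (supConv_le fun u v huv => ?_)
    have hu : l₂ u ≤ c u + k * (n * δ) := by
      refine h₂.le_add_of_le hS5 hcF hc2 (((hS.le_add_right u v).trans huv).trans hz) ?_ ?_
      · rw [h₂.map_nsmul]; finiteness
      · rw [h₂.map_nsmul, hcF.map_nsmul, ← mul_add]; gcongr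
    have hv : l₃ v ≤ d v + k * δ' :=
      h₃.le_add_of_le hS5 hdF hd3 ((hS.le_add_left v u).trans huv) hz3 hzd
    calc l₂ u + l₃ v ≤ (e u + k * (n * δ)) + (e v + k * δ') :=
          add_le_add (hu.trans (by gcongr; exact hce u)) (hv.trans (by gcongr; exact hde v))
      _ = e (u + v) + k * (δ' + n * δ) := by rw [heF.map_add]; ring
      _ ≤ _ := by gcongr; exact heF.mono huv
  simpa using main
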